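/- arXiv:1503.00864 — 6 statements merged into one kernel-verified Lean document; each statement's English description precedes it below -/
import Mathlib

section
/- Let n ≥ 1 and, for i = 1,…,n, let c_i > 0 and A_i, a_i, b_i, B_i be real numbers, and let b_0, B_0 be real numbers, such that b_i ≥ 0 and |a_i| < b_0 − b_i for every i. Define g : ℝ → ℝ by g(x) = Σ_{i=1}^n c_i · exp(A_i + a_i x) · cosh(B_i + b_i x) / cosh(B_0 + b_0 x). Then there exists ξ ∈ ℝ such that g is strictly increasing on (−∞, ξ], strictly decreasing on [ξ, ∞) (so g attains a unique maximum at ξ), and g(x) → 0 as x → +∞ and as x → −∞. -/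
/-!
Since `exp (A + a * x) * cosh (B + b * x)` is half the sum of two exponentials of rates `a ± b`,
the function `g` is a quotient `f / h` of a positive exponential sum `f`, all of whose rates are
smaller than `b0` in absolute value, by `h x = cosh (B0 + b0 * x)`. Then `f'' < b0 ^ 2 * f` while
`h'' = b0 ^ 2 * h`, so the Wronskian `f' * h - f * h'` has negative derivative `f'' * h - f * h''`.
It carries the sign of `g'`, hence `g'` changes sign exactly once, at the maximum which `g` attains
because it is positive and vanishes at `±∞`.
-/

open Real Set Filter

section Quotient

variable {f f' f'' h h' h'' : ℝ → ℝ}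

lemma strictAnti_wronskian
    (hf : ∀ x, HasDerivAt f (f' x) x) (hf' : ∀ x, HasDerivAt f' (f'' x) x)
    (hh : ∀ x, HasDerivAt h (h' x) x) (hh' : ∀ x, HasDerivAt h' (h'' x) x)
    (hlt : ∀ x, f'' x * h x < f x * h'' x) :
    StrictAnti fun x => f' x * h x - f x * h' x := by
  have hderiv (x : ℝ) :
      HasDerivAt (fun x => f' x * h x - f x * h' x) (f'' x * h x - f x * h'' x) x :=
    (((hf' x).fun_mul (hh x)).fun_sub ((hf x).fun_mul (hh' x))).congr_deriv (by ring)
  refine strictAnti_of_deriv_neg fun x => ?_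
  rw [(hderiv x).deriv]
  exact sub_neg.2 (hlt x)

lemma strictMonoOn_Iic_and_strictAntiOn_Ici_div {ξ : ℝ}
    (hf : ∀ x, HasDerivAt f (f' x) x) (hh : ∀ x, HasDerivAt h (h' x) x) (hne : ∀ x, h x ≠ 0)
    (hanti : StrictAnti fun x => f' x * h x - f x * h' x)
    (hξ : f' ξ * h ξ - f ξ * h' ξ = 0) :
    StrictMonoOn (fun x => f x / h x) (Iic ξ) ∧ StrictAntiOn (fun x => f x / h x) (Ici ξ) := by
  have hderiv (x : ℝ) := (hf x).fun_div (hh x) (hne x)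
  have hcont : Continuous fun x => f x / h x :=
    continuous_iff_continuousAt.2 fun x => (hderiv x).continuousAt
  constructor
  · refine strictMonoOn_of_deriv_pos (convex_Iic ξ) hcont.continuousOn fun x hx => ?_
    rw [interior_Iic] at hx
    rw [(hderiv x).deriv]
    exact div_pos (hξ ▸ hanti hx) (sq_pos_of_ne_zero (hne x))
  · refine strictAntiOn_of_deriv_neg (convex_Ici ξ) hcont.continuousOn fun x hx => ?_
    rw [interior_Ici] at hx
    rw [(hderiv x).deriv]
    exact div_neg_of_neg_of_pos (hξ ▸ hanti hx) (sq_pos_of_ne_zero (hne x))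

theorem exists_strictMonoOn_Iic_and_strictAntiOn_Ici_div
    (hf : ∀ x, HasDerivAt f (f' x) x) (hf' : ∀ x, HasDerivAt f' (f'' x) x)
    (hh : ∀ x, HasDerivAt h (h' x) x) (hh' : ∀ x, HasDerivAt h' (h'' x) x)
    (hlt : ∀ x, f'' x * h x < f x * h'' x) (hne : ∀ x, h x ≠ 0) {l x₀ : ℝ} (hx₀ : l < f x₀ / h x₀)
    (hlim : Tendsto (fun x => f x / h x) (cocompact ℝ) (nhds l)) :
    ∃ ξ, StrictMonoOn (fun x => f x / h x) (Iic ξ) ∧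
      StrictAntiOn (fun x => f x / h x) (Ici ξ) := by
  have hderiv (x : ℝ) := (hf x).fun_div (hh x) (hne x)
  have hcont : Continuous fun x => f x / h x :=
    continuous_iff_continuousAt.2 fun x => (hderiv x).continuousAt
  obtain ⟨ξ, hmax⟩ : ∃ ξ, ∀ x, f x / h x ≤ f ξ / h ξ :=
    hcont.exists_forall_ge' x₀ <| (hlim.eventually_lt_const hx₀).mono fun _ => le_of_lt
  have hcrit : (f' ξ * h ξ - f ξ * h' ξ) / h ξ ^ 2 = 0 :=
    IsLocalMax.hasDerivAt_eq_zero (Eventually.of_forall hmax) (hderiv ξ)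
  have hwronskian : f' ξ * h ξ - f ξ * h' ξ = 0 :=
    (div_eq_zero_iff.1 hcrit).resolve_right (pow_ne_zero 2 (hne ξ))
  exact ⟨ξ, strictMonoOn_Iic_and_strictAntiOn_Ici_div hf hh hne
    (strictAnti_wronskian hf hf' hh hh' hlt) hwronskian⟩

end Quotient

lemma tendsto_exp_mul_div_cosh_atTop {q b : ℝ} (hq : q < b) (B : ℝ) :
    Tendsto (fun x => exp (q * x) / cosh (B + b * x)) atTop (nhds 0) := by
  have hlim : Tendsto (fun x => 2 * exp (-B + (q - b) * x)) atTop (nhds 0) := by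
    have hexponent : Tendsto (fun x => -B + (q - b) * x) atTop atBot :=
      tendsto_atBot_add_const_left _ _ (tendsto_id.const_mul_atTop_of_neg (sub_neg.2 hq))
    simpa using (tendsto_exp_atBot.comp hexponent).const_mul 2
  refine squeeze_zero (fun x => (div_pos (exp_pos _) (cosh_pos _)).le) (fun x => ?_) hlim
  have hcosh : exp (B + b * x) ≤ 2 * cosh (B + b * x) := by
    rw [cosh_eq]
    linarith [exp_pos (-(B + b * x))]
  rw [div_le_iff₀ (cosh_pos _)]
  calc exp (q * x) = exp (-B + (q - b) * x) * exp (B + b * x) := by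
        rw [← exp_add]
        ring_nf
    _ ≤ exp (-B + (q - b) * x) * (2 * cosh (B + b * x)) := by gcongr
    _ = 2 * exp (-B + (q - b) * x) * cosh (B + b * x) := by ring

section ExpSum

variable {ι : Type*} [Fintype ι]

/-- The exponential sum with coefficients `p` and rates `q`. These sums are closed under
differentiation and include the products of an exponential and a hyperbolic cosine. -/
noncomputable def expSum (p q : ι → ℝ) (x : ℝ) : ℝ := ∑ i, p i * exp (q i * x)

lemma hasDerivAt_expSum (p q : ι → ℝ) (x : ℝ) :
    HasDerivAt (expSum p q) (expSum (p * q) q x) x := by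
  have hterm (i : ι) : HasDerivAt (fun x => p i * exp (q i * x)) ((p * q) i * exp (q i * x)) x :=
    (((hasDerivAt_id x).const_mul (q i)).exp.const_mul (p i)).congr_deriv <| by
      simp only [id, Pi.mul_apply]
      ring
  exact HasDerivAt.fun_sum fun i _ => hterm i

lemma expSum_neg (p q : ι → ℝ) (x : ℝ) : expSum p q (-x) = expSum p (-q) x := by
  simp only [expSum, Pi.neg_apply, mul_neg, neg_mul]

lemma tendsto_expSum_div_cosh_atTop (p : ι → ℝ) {q : ι → ℝ} {b : ℝ} (hq : ∀ i, q i < b)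
    (B : ℝ) : Tendsto (fun x => expSum p q x / cosh (B + b * x)) atTop (nhds 0) := by
  have hsum := tendsto_finsetSum Finset.univ fun i _ =>
    (tendsto_exp_mul_div_cosh_atTop (hq i) B).const_mul (p i)
  simpa only [expSum, Finset.sum_div, mul_div_assoc, mul_zero, Finset.sum_const_zero] using hsum

lemma tendsto_expSum_div_cosh_atBot (p : ι → ℝ) {q : ι → ℝ} {b : ℝ} (hq : ∀ i, -b < q i)
    (B : ℝ) : Tendsto (fun x => expSum p q x / cosh (B + b * x)) atBot (nhds 0) := by
  have hreflect : Tendsto (fun x => expSum p (-q) (-x) / cosh (-B + b * -x)) atBot (nhds 0) :=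
    (tendsto_expSum_div_cosh_atTop p (fun i => neg_lt.1 (hq i)) (-B)).comp
      tendsto_neg_atBot_atTop
  refine hreflect.congr fun x => ?_
  rw [expSum_neg, neg_neg, mul_neg, ← neg_add, cosh_neg]

lemma sum_exp_mul_cosh_eq_expSum (c A a B b : ι → ℝ) (x : ℝ) :
    ∑ i, c i * exp (A i + a i * x) * cosh (B i + b i * x) =
      expSum (Sum.elim (fun i => c i / 2 * exp (A i + B i)) fun i => c i / 2 * exp (A i - B i))
        (Sum.elim (a + b) (a - b)) x := by
  rw [expSum, Fintype.sum_sum_type, ← Finset.sum_add_distrib]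
  refine Finset.sum_congr rfl fun i _ => ?_
  have hadd : exp (A i + B i) * exp ((a i + b i) * x) =
      exp (A i + a i * x) * exp (B i + b i * x) := by
    rw [← exp_add, ← exp_add]
    ring_nf
  have hsub : exp (A i - B i) * exp ((a i - b i) * x) =
      exp (A i + a i * x) * exp (-(B i + b i * x)) := by
    rw [← exp_add, ← exp_add]
    ring_nf
  simp only [Sum.elim_inl, Sum.elim_inr, Pi.add_apply, Pi.sub_apply]
  rw [mul_assoc (c i / 2), mul_assoc (c i / 2), hadd, hsub, cosh_eq]
  ring

variable [Nonempty ι] {p q : ι → ℝ} {b : ℝ}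

lemma expSum_pos (hp : ∀ i, 0 < p i) (q : ι → ℝ) (x : ℝ) : 0 < expSum p q x :=
  Finset.sum_pos (fun i _ => mul_pos (hp i) (exp_pos _)) Finset.univ_nonempty

lemma expSum_mul_mul_lt_sq_mul_expSum (hp : ∀ i, 0 < p i) (hq : ∀ i, |q i| < b) (x : ℝ) :
    expSum (p * q * q) q x < b ^ 2 * expSum p q x := by
  rw [expSum, expSum, Finset.mul_sum]
  refine Finset.sum_lt_sum_of_nonempty Finset.univ_nonempty fun i _ => ?_
  have hsq : q i ^ 2 < b ^ 2 := sq_lt_sq' (neg_lt_of_abs_lt (hq i)) (lt_of_abs_lt (hq i))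
  calc (p * q * q) i * exp (q i * x) = q i ^ 2 * (p i * exp (q i * x)) := by
        simp only [Pi.mul_apply]
        ring
    _ < b ^ 2 * (p i * exp (q i * x)) :=
        mul_lt_mul_of_pos_right hsq (mul_pos (hp i) (exp_pos _))

theorem exists_strictMonoOn_Iic_and_strictAntiOn_Ici_expSum_div_cosh
    (hp : ∀ i, 0 < p i) (hq : ∀ i, |q i| < b) (B : ℝ) :
    ∃ ξ, StrictMonoOn (fun x => expSum p q x / cosh (B + b * x)) (Iic ξ) ∧
      StrictAntiOn (fun x => expSum p q x / cosh (B + b * x)) (Ici ξ) := by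
  have haffine (x : ℝ) : HasDerivAt (fun x => B + b * x) b x := by
    simpa using ((hasDerivAt_id x).const_mul b).const_add B
  have hlim : Tendsto (fun x => expSum p q x / cosh (B + b * x)) (cocompact ℝ) (nhds 0) := by
    rw [cocompact_eq_atBot_atTop]
    exact (tendsto_expSum_div_cosh_atBot p (fun i => neg_lt_of_abs_lt (hq i)) B).sup
      (tendsto_expSum_div_cosh_atTop p (fun i => lt_of_abs_lt (hq i)) B)
  refine exists_strictMonoOn_Iic_and_strictAntiOn_Ici_div
    (hasDerivAt_expSum p q) (hasDerivAt_expSum (p * q) q)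
    (fun x => (haffine x).cosh) (fun x => (haffine x).sinh.mul_const b)
    (fun x => ?_) (fun x => (cosh_pos _).ne') (div_pos (expSum_pos hp q 0) (cosh_pos _)) hlim
  calc expSum (p * q * q) q x * cosh (B + b * x)
      < b ^ 2 * expSum p q x * cosh (B + b * x) :=
        mul_lt_mul_of_pos_right (expSum_mul_mul_lt_sq_mul_expSum hp hq x) (cosh_pos _)
    _ = expSum p q x * (cosh (B + b * x) * b * b) := by ring

end ExpSum

theorem stmt_0 (n : ℕ) (hn : 1 ≤ n)
    (c A a b B : Fin n → ℝ) (b0 B0 : ℝ)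
    (hc : ∀ i, 0 < c i) (hb : ∀ i, 0 ≤ b i)
    (hab : ∀ i, |a i| < b0 - b i)
    (g : ℝ → ℝ)
    (hg : ∀ x, g x = ∑ i, c i * Real.exp (A i + a i * x) * Real.cosh (B i + b i * x) /
      Real.cosh (B0 + b0 * x)) :
    ∃ ξ : ℝ, StrictMonoOn g (Iic ξ) ∧ StrictAntiOn g (Ici ξ) ∧
      Tendsto g atTop (nhds 0) ∧ Tendsto g atBot (nhds 0) := by
  have : Nonempty (Fin n) := ⟨⟨0, hn⟩⟩
  let p : Fin n ⊕ Fin n → ℝ :=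
    Sum.elim (fun i => c i / 2 * exp (A i + B i)) fun i => c i / 2 * exp (A i - B i)
  let q : Fin n ⊕ Fin n → ℝ := Sum.elim (a + b) (a - b)
  have hp : ∀ k, 0 < p k := by
    rintro (i | i) <;> exact mul_pos (half_pos (hc i)) (exp_pos _)
  have hq : ∀ k, |q k| < b0 := by
    have habs (i : Fin n) : |a i| + |b i| < b0 := by
      rw [abs_of_nonneg (hb i)]
      exact lt_sub_iff_add_lt.1 (hab i)
    rintro (i | i)
    · exact (abs_add_le (a i) (b i)).trans_lt (habs i)
    · exact (abs_sub (a i) (b i)).trans_lt (habs i)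
  obtain rfl : g = fun x => expSum p q x / cosh (B0 + b0 * x) := funext fun x => by
    rw [hg, ← Finset.sum_div, sum_exp_mul_cosh_eq_expSum]
  obtain ⟨ξ, hmono, hanti⟩ := exists_strictMonoOn_Iic_and_strictAntiOn_Ici_expSum_div_cosh hp hq B0
  exact ⟨ξ, hmono, hanti, tendsto_expSum_div_cosh_atTop p (fun k => lt_of_abs_lt (hq k)) B0,
    tendsto_expSum_div_cosh_atBot p (fun k => neg_lt_of_abs_lt (hq k)) B0⟩
end

section
/- Let a, b, b_0, B, B_0 be real numbers with b ≥ 0 and |a| < b_0 − b. Define f : ℝ → ℝ by f(x) = a·cosh(B + b x)·cosh(B_0 + b_0 x) + b·sinh(B + b x)·cosh(B_0 + b_0 x) − b_0·cosh(B + b x)·sinh(B_0 + b_0 x). Then f is strictly decreasing on ℝ. -/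
open Real

/-!
By the product-to-sum formulas, `2 f x` is the sum of `a cosh y - (b₀ - b) sinh y` at
`y = (B₀ + b₀ x) + (B + b x)` and of `a cosh y - (b₀ + b) sinh y` at
`y = (B₀ + b₀ x) - (B + b x)`. Both values of `y` increase strictly with `x`, and since
`|sinh| < cosh`, the function `a cosh y - k sinh y` is strictly decreasing when `k > 0` and
`|a| ≤ k`.
-/

lemma abs_sinh_lt_cosh (y : ℝ) : |sinh y| < cosh y := by
  rw [abs_sinh, ← cosh_abs]
  exact sinh_lt_cosh _

lemma strictAnti_mul_cosh_sub_mul_sinh {a k : ℝ} (hk : 0 < k) (ha : |a| ≤ k) :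
    StrictAnti fun y ↦ a * cosh y - k * sinh y := by
  have hderiv (y : ℝ) :
      HasDerivAt (fun y ↦ a * cosh y - k * sinh y) (a * sinh y - k * cosh y) y :=
    ((hasDerivAt_cosh y).const_mul a).sub ((hasDerivAt_sinh y).const_mul k)
  refine strictAnti_of_hasDerivAt_neg hderiv fun y ↦ sub_neg.mpr ?_
  calc a * sinh y ≤ |a| * |sinh y| := (le_abs_self _).trans_eq (abs_mul _ _)
    _ ≤ k * |sinh y| := by gcongr
    _ < k * cosh y := by gcongr; exact abs_sinh_lt_cosh y

lemma cosh_sinh_products_eq_half_sum (a b b₀ u v : ℝ) :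
    a * cosh u * cosh v + b * sinh u * cosh v - b₀ * cosh u * sinh v =
      ((a * cosh (v + u) - (b₀ - b) * sinh (v + u)) +
        (a * cosh (v - u) - (b₀ + b) * sinh (v - u))) / 2 := by
  rw [cosh_add, cosh_sub, sinh_add, sinh_sub]
  ring

theorem stmt_1_general {a b b₀ : ℝ} (hb : |b| < b₀) (ha : |a| ≤ b₀ - |b|) (B B₀ : ℝ) :
    StrictAnti fun x ↦ a * cosh (B + b * x) * cosh (B₀ + b₀ * x)
      + b * sinh (B + b * x) * cosh (B₀ + b₀ * x)
      - b₀ * cosh (B + b * x) * sinh (B₀ + b₀ * x) := by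
  have hsub : 0 < b₀ - b := by linarith [le_abs_self b]
  have hadd : 0 < b₀ + b := by linarith [neg_abs_le b]
  have hsum_arg : StrictMono fun x ↦ (B₀ + b₀ * x) + (B + b * x) :=
    fun x y hxy ↦ by linarith [mul_lt_mul_of_pos_left hxy hadd]
  have hdiff_arg : StrictMono fun x ↦ (B₀ + b₀ * x) - (B + b * x) :=
    fun x y hxy ↦ by linarith [mul_lt_mul_of_pos_left hxy hsub]
  have hsum := (strictAnti_mul_cosh_sub_mul_sinh (a := a) hsub
    (by linarith [le_abs_self b])).comp_strictMono hsum_arg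
  have hdiff := (strictAnti_mul_cosh_sub_mul_sinh (a := a) hadd
    (by linarith [neg_abs_le b])).comp_strictMono hdiff_arg
  simp only [cosh_sinh_products_eq_half_sum]
  exact fun x y hxy ↦ div_lt_div_of_pos_right ((hsum.add hdiff) hxy) two_pos

theorem stmt_1 (a b b0 B B0 : ℝ) (hb : 0 ≤ b) (hab : |a| < b0 - b)
    (f : ℝ → ℝ)
    (hf : ∀ x, f x = a * Real.cosh (B + b * x) * Real.cosh (B0 + b0 * x)
      + b * Real.sinh (B + b * x) * Real.cosh (B0 + b0 * x)
      - b0 * Real.cosh (B + b * x) * Real.sinh (B0 + b0 * x)) :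
    StrictAnti f := by
  rw [← abs_of_nonneg hb] at hab
  exact funext hf ▸ stmt_1_general (sub_pos.mp ((abs_nonneg a).trans_lt hab)) hab.le B B0
end

section
/- Let a, b, b_0, B, B_0 be real numbers with b ≥ 0 and |a| < b_0 − b. Define f : ℝ → ℝ by f(x) = a·cosh(B + b x)·cosh(B_0 + b_0 x) + b·sinh(B + b x)·cosh(B_0 + b_0 x) − b_0·cosh(B + b x)·sinh(B_0 + b_0 x). Then f(x) → +∞ as x → −∞ and f(x) → −∞ as x → +∞. -/
/-!
Since `|sinh| ≤ cosh`, the function is at most `cosh u * ((a + |b|) * cosh v - c * sinh v)` with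
`u = B + b x`, `v = B₀ + b₀ x` and `c = b₀`. In the second factor the coefficient of `exp v` is
`(a + |b| - c) / 2 < 0`, so that factor tends to `-∞` as `v → ∞`, and `cosh u ≥ 1` only
amplifies it. The limit at `-∞` follows by the reflection `(a, u, v) ↦ (-a, -u, -v)`, which
changes the sign of the function.
-/

open Real Filter

/-- The numerator of the derivative of `exp (a x) * cosh u / cosh v`, up to the positive factor
`exp (a x)`, when `b` and `c` are the derivatives of `u` and `v`. The phases `u` and `v` are
independent real variables here. -/
noncomputable def derivNumerator (a b c u v : ℝ) : ℝ :=
  a * cosh u * cosh v + b * sinh u * cosh v - c * cosh u * sinh v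

theorem derivNumerator_neg_neg_neg (a b c u v : ℝ) :
    derivNumerator (-a) b c (-u) (-v) = -derivNumerator a b c u v := by
  simp only [derivNumerator, cosh_neg, sinh_neg]
  ring

theorem mul_sinh_le_abs_mul_cosh (b u : ℝ) : b * sinh u ≤ |b| * cosh u :=
  calc b * sinh u ≤ |b| * |sinh u| := (le_abs_self _).trans_eq (abs_mul b (sinh u))
    _ = |b| * sinh |u| := by rw [abs_sinh]
    _ ≤ |b| * cosh |u| := by gcongr; exact (sinh_lt_cosh |u|).le
    _ = |b| * cosh u := by rw [cosh_abs]

theorem tendsto_mul_cosh_sub_mul_sinh_atTop_atBot {p c : ℝ} (hpc : p < c) :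
    Tendsto (fun v ↦ p * cosh v - c * sinh v) atTop atBot := by
  have h_grow : Tendsto (fun v ↦ (p - c) / 2 * exp v) atTop atBot :=
    tendsto_exp_atTop.const_mul_atTop_of_neg (by linarith)
  have h_decay : Tendsto (fun v ↦ (p + c) / 2 * exp (-v)) atTop (nhds ((p + c) / 2 * 0)) :=
    tendsto_exp_neg_atTop_nhds_zero.const_mul _
  refine (h_grow.atBot_add h_decay).congr fun v ↦ ?_
  rw [cosh_eq, sinh_eq]
  ring

theorem derivNumerator_le (a b c u v : ℝ) :
    derivNumerator a b c u v ≤ cosh u * ((a + |b|) * cosh v - c * sinh v) :=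
  calc a * cosh u * cosh v + b * sinh u * cosh v - c * cosh u * sinh v
      ≤ a * cosh u * cosh v + |b| * cosh u * cosh v - c * cosh u * sinh v := by
        have h_sinh := mul_le_mul_of_nonneg_right (mul_sinh_le_abs_mul_cosh b u) (cosh_pos v).le
        gcongr _ + ?_ - _
    _ = cosh u * ((a + |b|) * cosh v - c * sinh v) := by ring

section Limits

variable {α : Type*} {l : Filter α} {a b c : ℝ} {v : α → ℝ}

theorem tendsto_derivNumerator_atBot (habc : a + |b| < c) (u : α → ℝ) (hv : Tendsto v l atTop) :
    Tendsto (fun x ↦ derivNumerator a b c (u x) (v x)) l atBot := by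
  have h_factor : Tendsto (fun x ↦ (a + |b|) * cosh (v x) - c * sinh (v x)) l atBot :=
    (tendsto_mul_cosh_sub_mul_sinh_atTop_atBot habc).comp hv
  refine tendsto_atBot_mono' l ?_ h_factor
  filter_upwards [h_factor.eventually_le_atBot 0] with x h_nonpos
  calc derivNumerator a b c (u x) (v x)
      ≤ cosh (u x) * ((a + |b|) * cosh (v x) - c * sinh (v x)) := derivNumerator_le ..
    _ ≤ (a + |b|) * cosh (v x) - c * sinh (v x) :=
        mul_le_of_one_le_left h_nonpos (one_le_cosh (u x))

theorem tendsto_derivNumerator_atTop (habc : -a + |b| < c) (u : α → ℝ) (hv : Tendsto v l atBot) :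
    Tendsto (fun x ↦ derivNumerator a b c (u x) (v x)) l atTop := by
  have h_reflected : Tendsto (fun x ↦ derivNumerator (-a) b c (-u x) (-v x)) l atBot :=
    tendsto_derivNumerator_atBot habc (fun x ↦ -u x) (tendsto_neg_atBot_atTop.comp hv)
  simpa only [derivNumerator_neg_neg_neg, tendsto_neg_atBot_iff] using h_reflected

end Limits

theorem stmt_2_general (a b b0 B B0 : ℝ) (hab : |a| + |b| < b0)
    (f : ℝ → ℝ)
    (hf : ∀ x, f x = a * Real.cosh (B + b * x) * Real.cosh (B0 + b0 * x)
      + b * Real.sinh (B + b * x) * Real.cosh (B0 + b0 * x)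
      - b0 * Real.cosh (B + b * x) * Real.sinh (B0 + b0 * x)) :
    Tendsto f atBot atTop ∧ Tendsto f atTop atBot := by
  have hb0 : 0 < b0 := (add_nonneg (abs_nonneg a) (abs_nonneg b)).trans_lt hab
  have h_atBot : Tendsto (fun x ↦ B0 + b0 * x) atBot atBot :=
    tendsto_atBot_add_const_left _ B0 (tendsto_id.const_mul_atBot hb0)
  have h_atTop : Tendsto (fun x ↦ B0 + b0 * x) atTop atTop :=
    tendsto_atTop_add_const_left _ B0 (tendsto_id.const_mul_atTop hb0)
  have hf_eq : f = fun x ↦ derivNumerator a b b0 (B + b * x) (B0 + b0 * x) := funext hf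
  rw [hf_eq]
  exact ⟨tendsto_derivNumerator_atTop (by linarith [neg_le_abs a]) _ h_atBot,
    tendsto_derivNumerator_atBot (by linarith [le_abs_self a]) _ h_atTop⟩

theorem stmt_2 (a b b0 B B0 : ℝ) (hb : 0 ≤ b) (hab : |a| < b0 - b)
    (f : ℝ → ℝ)
    (hf : ∀ x, f x = a * Real.cosh (B + b * x) * Real.cosh (B0 + b0 * x)
      + b * Real.sinh (B + b * x) * Real.cosh (B0 + b0 * x)
      - b0 * Real.cosh (B + b * x) * Real.sinh (B0 + b0 * x)) :
    Tendsto f atBot atTop ∧ Tendsto f atTop atBot :=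
  stmt_2_general a b b0 B B0 (by rw [abs_of_nonneg hb]; linarith) f hf
end

section
/- Let n ≥ 1, let C_1,…,C_n and v_1,…,v_n be real numbers, let κ_1 < κ_2 be real numbers, and suppose Σ_{k=1}^n C_k·exp(v_k κ_1) = 0 and Σ_{k=1}^n C_k·exp(v_k κ_2) = 0. Define f : ℝ → ℝ by f(x) = Σ_{k=1}^n C_k e^{v_k x} for x ∈ (κ_1, κ_2) and f(x) = 0 otherwise, and define f̂(z) = ∫_{κ_1}^{κ_2} e^{−i z x} (Σ_{k=1}^n C_k e^{v_k x}) dx for z ∈ ℂ. Then for every R ∈ ℝ and every x ∈ ℝ, f(x) = (1/π) ∫_0^∞ Re( e^{(i u + R) x} · f̂(u − i R) ) du. -/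
open Real Set MeasureTheory

/-!
Shifting the frequency, `ĝ (u + w)` is the transform of `y ↦ e ^ (-i w y) g y` at `u`, so only
real frequencies need analysis. A `C²` function vanishing at both endpoints of `[a, b]` extends by
zero to a continuous function on the line. Its derivative may jump at the endpoints, but
integrating by parts twice still gives `ĝ u = O (1 / (1 + u ^ 2))`, because the boundary terms of
the second integration need only be bounded. Hence `ĝ` is integrable and Fourier inversion
applies. For real-valued `g` and an imaginary shift the inversion integrand is Hermitian in `u`,
which folds the integral onto a half-line.
-/

section Inversion

open scoped FourierTransform

variable {E : Type*} [NormedAddCommGroup E] [NormedSpace ℂ E]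

theorem fourier_div_two_pi (g : ℝ → E) (u : ℝ) :
    𝓕 g (u / (2 * π)) = ∫ y : ℝ, Complex.exp (-(Complex.I * u) * y) • g y := by
  rw [Real.fourier_real_eq_integral_exp_smul]
  congr! 3 with y
  push_cast
  field_simp

theorem integral_cexp_smul_integral_cexp_smul [CompleteSpace E] {g : ℝ → E} (hg : Integrable g)
    (hfourier : Integrable fun u : ℝ ↦ ∫ y : ℝ, Complex.exp (-(Complex.I * u) * y) • g y)
    {x : ℝ} (hx : ContinuousAt g x) :
    ∫ u : ℝ, Complex.exp (Complex.I * u * x) •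
      ∫ y : ℝ, Complex.exp (-(Complex.I * u) * y) • g y = (2 * π) • g x := by
  simp only [← fourier_div_two_pi] at hfourier ⊢
  have hint : Integrable (𝓕 g) := (integrable_comp_div_iff (𝓕 g) two_pi_pos.ne').1 hfourier
  rw [← hg.fourierInv_fourier_eq hint hx, Real.fourierInv_eq', ← abs_of_pos two_pi_pos,
    ← Measure.integral_comp_div, abs_of_pos two_pi_pos]
  congr! 3 with u
  simp only [RCLike.inner_apply, conj_trivial]
  push_cast
  field_simp

end Inversion

theorem two_mul_integral_Ioi_re_of_hermitian {K : ℝ → ℂ} (hK : Integrable K)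
    (hconj : ∀ u, K (-u) = starRingEnd ℂ (K u)) :
    2 * ∫ u in Ioi (0 : ℝ), (K u).re = (∫ u, K u).re := by
  have heven (u : ℝ) : (K |u|).re = (K u).re := by
    rcases abs_choice u with h | h <;> simp only [h, hconj, Complex.conj_re]
  calc 2 * ∫ u in Ioi (0 : ℝ), (K u).re
      = ∫ u, (K |u|).re := integral_comp_abs.symm
    _ = ∫ u, (K u).re := by simp only [heven]
    _ = (∫ u, K u).re := integral_re hK

section IntervalFourier

variable {E : Type*} [NormedAddCommGroup E] [NormedSpace ℂ E]

/-- The analytic Fourier transform `ĝ z = ∫ e ^ (-i z y) g y dy` of the restriction of `g` to the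
interval from `a` to `b`, in the angular-frequency normalization and at a complex frequency `z`. -/
noncomputable def intervalFourier (a b : ℝ) (g : ℝ → E) (z : ℂ) : E :=
  ∫ y in a..b, Complex.exp (-(Complex.I * z) * y) • g y

variable {a b : ℝ} {g : ℝ → E}

theorem intervalFourier_eq_integral_indicator (hab : a ≤ b) (z : ℂ) :
    intervalFourier a b g z =
      ∫ y : ℝ, Complex.exp (-(Complex.I * z) * y) • (Ioo a b).indicator g y := by
  rw [intervalFourier, intervalIntegral.integral_of_le hab, integral_Ioc_eq_integral_Ioo,
    ← integral_indicator measurableSet_Ioo]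
  simp only [indicator_smul]

theorem intervalFourier_add (z w : ℂ) :
    intervalFourier a b g (z + w) =
      intervalFourier a b (fun y ↦ Complex.exp (-(Complex.I * w) * y) • g y) z := by
  unfold intervalFourier
  simp only [smul_smul, ← Complex.exp_add]
  ring_nf

theorem norm_cexp_neg_I_mul_ofReal_mul_ofReal (u y : ℝ) :
    ‖Complex.exp (-(Complex.I * u) * y)‖ = 1 := by
  simp [Complex.norm_exp]

theorem norm_intervalFourier_ofReal_le (hab : a ≤ b) (u : ℝ) :
    ‖intervalFourier a b g u‖ ≤ ∫ y in a..b, ‖g y‖ := by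
  refine (intervalIntegral.norm_integral_le_integral_norm hab).trans_eq ?_
  simp only [norm_smul, norm_cexp_neg_I_mul_ofReal_mul_ofReal, one_mul]

theorem continuous_intervalFourier_ofReal (hg : IntervalIntegrable g volume a b) :
    Continuous fun u : ℝ ↦ intervalFourier a b g u := by
  refine intervalIntegral.continuous_of_dominated_interval (bound := fun y ↦ ‖g y‖)
    (fun u ↦ ?_) (fun u ↦ .of_forall fun y _ ↦ ?_) hg.norm (.of_forall fun y _ ↦ by fun_prop)
  · exact (Continuous.aestronglyMeasurable (by fun_prop)).smul hg.def'.aestronglyMeasurable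
  · rw [norm_smul, norm_cexp_neg_I_mul_ofReal_mul_ofReal, one_mul]

theorem conj_intervalFourier (g : ℝ → ℂ) (z : ℂ) :
    starRingEnd ℂ (intervalFourier a b g z) =
      intervalFourier a b (fun y ↦ starRingEnd ℂ (g y)) (-starRingEnd ℂ z) := by
  simp [intervalFourier, ← intervalIntegral.intervalIntegral_conj, ← Complex.exp_conj]

theorem intervalFourier_derivWithin [CompleteSpace E] (hab : a < b)
    (hg : ContDiffOn ℝ 1 g (Icc a b)) (z : ℂ) :
    intervalFourier a b (derivWithin g (Icc a b)) z =
      Complex.exp (-(Complex.I * z) * b) • g b - Complex.exp (-(Complex.I * z) * a) • g a +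
        (Complex.I * z) • intervalFourier a b g z := by
  have hexp (y : ℝ) : HasDerivAt (fun y : ℝ ↦ Complex.exp (-(Complex.I * z) * y))
      (-(Complex.I * z) * Complex.exp (-(Complex.I * z) * y)) y := by
    simpa [mul_comm] using ((hasDerivAt_id' (y : ℂ)).const_mul (-(Complex.I * z))).cexp.comp_ofReal
  have hderiv : ContinuousOn (derivWithin g (Icc a b)) (uIcc a b) := by
    rw [uIcc_of_le hab.le]
    exact hg.continuousOn_derivWithin (uniqueDiffOn_Icc hab) le_rfl
  have hg' : ∀ y ∈ uIcc a b, HasDerivWithinAt g (derivWithin g (Icc a b) y) (uIcc a b) y := by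
    rw [uIcc_of_le hab.le]
    exact fun y hy ↦ (hg.differentiableOn_one y hy).hasDerivWithinAt
  rw [intervalFourier, intervalIntegral.integral_smul_deriv_eq_deriv_smul_of_hasDerivWithinAt
    (fun y _ ↦ (hexp y).hasDerivWithinAt) hg' (Continuous.intervalIntegrable (by fun_prop) _ _)
    hderiv.intervalIntegrable]
  simp only [mul_smul, neg_smul, intervalIntegral.integral_neg, intervalIntegral.integral_smul,
    sub_neg_eq_add, intervalFourier]

theorem sq_smul_intervalFourier [CompleteSpace E] (hab : a < b) (hg : ContDiffOn ℝ 2 g (Icc a b))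
    (ha : g a = 0) (hb : g b = 0) (z : ℂ) :
    z ^ 2 • intervalFourier a b g z =
      Complex.exp (-(Complex.I * z) * b) • derivWithin g (Icc a b) b -
        Complex.exp (-(Complex.I * z) * a) • derivWithin g (Icc a b) a -
          intervalFourier a b (derivWithin (derivWithin g (Icc a b)) (Icc a b)) z := by
  have hg' : ContDiffOn ℝ 1 (derivWithin g (Icc a b)) (Icc a b) :=
    hg.derivWithin (uniqueDiffOn_Icc hab) (by norm_num)
  have hIz : (Complex.I * z) * (Complex.I * z) = -z ^ 2 := by
    linear_combination z ^ 2 * Complex.I_sq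
  rw [intervalFourier_derivWithin hab hg', intervalFourier_derivWithin hab (hg.of_le one_le_two),
    ha, hb, smul_zero, smul_zero, sub_zero, zero_add, smul_smul, hIz, neg_smul]
  abel

theorem norm_intervalFourier_ofReal_le_inv_one_add_sq [CompleteSpace E] (hab : a < b)
    (hg : ContDiffOn ℝ 2 g (Icc a b)) (ha : g a = 0) (hb : g b = 0) (u : ℝ) :
    ‖intervalFourier a b g u‖ ≤
      ((∫ y in a..b, ‖g y‖) + (‖derivWithin g (Icc a b) b‖ + ‖derivWithin g (Icc a b) a‖ +
        ∫ y in a..b, ‖derivWithin (derivWithin g (Icc a b)) (Icc a b) y‖)) *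
          (1 + u ^ 2)⁻¹ := by
  have hsq : u ^ 2 * ‖intervalFourier a b g u‖ ≤
      ‖derivWithin g (Icc a b) b‖ + ‖derivWithin g (Icc a b) a‖ +
        ∫ y in a..b, ‖derivWithin (derivWithin g (Icc a b)) (Icc a b) y‖ := by
    have hnorm : u ^ 2 * ‖intervalFourier a b g u‖ = ‖(u : ℂ) ^ 2 • intervalFourier a b g u‖ := by
      simp [norm_smul]
    rw [hnorm, sq_smul_intervalFourier hab hg ha hb]
    refine (norm_sub_le _ _).trans (add_le_add ((norm_sub_le _ _).trans_eq ?_)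
      (norm_intervalFourier_ofReal_le hab.le u))
    simp only [norm_smul, norm_cexp_neg_I_mul_ofReal_mul_ofReal, one_mul]
  rw [← div_eq_mul_inv, le_div_iff₀ (by positivity), mul_one_add, mul_comm _ (u ^ 2)]
  exact add_le_add (norm_intervalFourier_ofReal_le hab.le u) hsq

theorem integrable_intervalFourier_ofReal [CompleteSpace E] (hab : a < b)
    (hg : ContDiffOn ℝ 2 g (Icc a b)) (ha : g a = 0) (hb : g b = 0) :
    Integrable fun u : ℝ ↦ intervalFourier a b g u :=
  (integrable_inv_one_add_sq.const_mul _).mono'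
    (continuous_intervalFourier_ofReal
      (hg.continuousOn.intervalIntegrable_of_Icc hab.le)).aestronglyMeasurable
    (.of_forall (norm_intervalFourier_ofReal_le_inv_one_add_sq hab hg ha hb))

theorem integral_cexp_smul_intervalFourier_ofReal [CompleteSpace E] (hab : a < b)
    (hg : ContDiffOn ℝ 2 g (Icc a b)) (ha : g a = 0) (hb : g b = 0) (x : ℝ) :
    ∫ u : ℝ, Complex.exp (Complex.I * u * x) • intervalFourier a b g u =
      (2 * π) • (Ioo a b).indicator g x := by
  have hcont : Continuous ((Ioo a b).indicator g) := by
    refine continuous_indicator ?_ ?_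
    · simp [frontier_Ioo hab, ha, hb]
    · simpa only [closure_Ioo hab.ne] using hg.continuousOn
  have hint : Integrable ((Ioo a b).indicator g) :=
    (hg.continuousOn.integrableOn_Icc.mono_set Ioo_subset_Icc_self).integrable_indicator
      measurableSet_Ioo
  have hfourier := integrable_intervalFourier_ofReal hab hg ha hb
  simp only [intervalFourier_eq_integral_indicator hab.le] at hfourier ⊢
  exact integral_cexp_smul_integral_cexp_smul hint hfourier hcont.continuousAt

theorem contDiffOn_cexp_smul {s : Set ℝ} {n : WithTop ℕ∞} (hg : ContDiffOn ℝ n g s) (c : ℂ) :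
    ContDiffOn ℝ n (fun y : ℝ ↦ Complex.exp (c * y) • g y) s :=
  ((contDiff_const.mul Complex.ofRealCLM.contDiff).cexp.contDiffOn).smul hg

theorem integrable_cexp_smul_intervalFourier [CompleteSpace E] (hab : a < b)
    (hg : ContDiffOn ℝ 2 g (Icc a b)) (ha : g a = 0) (hb : g b = 0) (w : ℂ) (x : ℝ) :
    Integrable fun u : ℝ ↦
      Complex.exp (Complex.I * (u + w) * x) • intervalFourier a b g (u + w) := by
  simp only [intervalFourier_add]
  refine (integrable_intervalFourier_ofReal hab (contDiffOn_cexp_smul hg _)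
    (by rw [ha, smul_zero]) (by rw [hb, smul_zero])).bdd_smul (C := Real.exp (-(w.im * x)))
    (Continuous.aestronglyMeasurable (by fun_prop)) (.of_forall fun u ↦ ?_)
  simp [Complex.norm_exp]

theorem integral_cexp_smul_intervalFourier [CompleteSpace E] (hab : a < b)
    (hg : ContDiffOn ℝ 2 g (Icc a b)) (ha : g a = 0) (hb : g b = 0) (w : ℂ) (x : ℝ) :
    ∫ u : ℝ, Complex.exp (Complex.I * (u + w) * x) • intervalFourier a b g (u + w) =
      (2 * π) • (Ioo a b).indicator g x := by
  have hexp (u : ℝ) (e : E) : Complex.exp (Complex.I * (u + w) * x) • e =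
      Complex.exp (Complex.I * w * x) • Complex.exp (Complex.I * u * x) • e := by
    rw [smul_smul, ← Complex.exp_add]
    ring_nf
  have hcancel : Complex.exp (Complex.I * w * x) * Complex.exp (-(Complex.I * w) * x) = 1 := by
    rw [← Complex.exp_add, neg_mul, add_neg_cancel, Complex.exp_zero]
  simp only [hexp, intervalFourier_add]
  rw [integral_smul, integral_cexp_smul_intervalFourier_ofReal hab (contDiffOn_cexp_smul hg _)
    (by rw [ha, smul_zero]) (by rw [hb, smul_zero]), indicator_smul, smul_comm, smul_smul, hcancel,
    one_smul]

theorem conj_cexp_smul_intervalFourier_ofReal (g : ℝ → ℝ) (z : ℂ) (x : ℝ) :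
    starRingEnd ℂ (Complex.exp (Complex.I * z * x) • intervalFourier a b (fun y ↦ (g y : ℂ)) z) =
      Complex.exp (Complex.I * -starRingEnd ℂ z * x) •
        intervalFourier a b (fun y ↦ (g y : ℂ)) (-starRingEnd ℂ z) := by
  simp [conj_intervalFourier, ← Complex.exp_conj]

end IntervalFourier

theorem stmt_9_general {a b : ℝ} (hab : a < b) {g : ℝ → ℝ} (hg : ContDiffOn ℝ 2 g (Icc a b))
    (ha : g a = 0) (hb : g b = 0) (R x : ℝ) :
    (Ioo a b).indicator g x = (1 / π) *
      ∫ u in Ioi (0 : ℝ),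
        (Complex.exp ((Complex.I * u + R) * x) *
          intervalFourier a b (fun y ↦ (g y : ℂ)) (u - Complex.I * R)).re := by
  let G : ℝ → ℂ := fun y ↦ (g y : ℂ)
  have hG : ContDiffOn ℝ 2 G (Icc a b) := Complex.ofRealCLM.contDiff.comp_contDiffOn hg
  have hGa : G a = 0 := Complex.ofReal_eq_zero.2 ha
  have hGb : G b = 0 := Complex.ofReal_eq_zero.2 hb
  have hexp (u : ℝ) : (Complex.I * u + R) * x = Complex.I * (u + -(Complex.I * R)) * x := by
    linear_combination R * x * Complex.I_sq
  simp only [hexp, sub_eq_add_neg, ← smul_eq_mul (α := ℂ) (Complex.exp _)]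
  have hint := integrable_cexp_smul_intervalFourier hab hG hGa hGb (-(Complex.I * R)) x
  have hneg (u : ℝ) : ((-u : ℝ) : ℂ) + -(Complex.I * R) =
      -starRingEnd ℂ (u + -(Complex.I * R)) := by
    simp [add_comm]
  have hfold := two_mul_integral_Ioi_re_of_hermitian hint fun u ↦ by
    rw [hneg, conj_cexp_smul_intervalFourier_ofReal]
  have hre : ((Ioo a b).indicator G x).re = (Ioo a b).indicator g x := by
    simp [G, indicator_apply, apply_ite Complex.re]
  rw [integral_cexp_smul_intervalFourier hab hG hGa hGb, Complex.smul_re, hre, smul_eq_mul,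
    mul_assoc] at hfold
  rw [mul_left_cancel₀ two_ne_zero hfold, one_div, inv_mul_cancel_left₀ pi_ne_zero]

theorem stmt_9 (n : ℕ) (hn : 1 ≤ n) (C v : Fin n → ℝ) (κ₁ κ₂ : ℝ) (hκ : κ₁ < κ₂)
    (hbd1 : ∑ k, C k * Real.exp (v k * κ₁) = 0)
    (hbd2 : ∑ k, C k * Real.exp (v k * κ₂) = 0)
    (f : ℝ → ℝ)
    (hf : ∀ x : ℝ, f x = if κ₁ < x ∧ x < κ₂ then ∑ k, C k * Real.exp (v k * x) else 0)
    (fhat : ℂ → ℂ)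
    (hfhat : ∀ z : ℂ, fhat z = ∫ x in κ₁..κ₂, Complex.exp (-(Complex.I * z) * (x : ℂ)) *
        ∑ k, (C k : ℂ) * Complex.exp ((v k : ℂ) * (x : ℂ))) :
    ∀ (R x : ℝ), f x = (1 / Real.pi) *
      ∫ u in Ioi (0 : ℝ),
        (Complex.exp ((Complex.I * (u : ℂ) + (R : ℂ)) * (x : ℂ)) *
          fhat ((u : ℂ) - Complex.I * (R : ℂ))).re := by
  intro R x
  simpa [hf, hfhat, intervalFourier, indicator_apply] using
    stmt_9_general hκ (g := fun y ↦ ∑ k, C k * Real.exp (v k * y))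
      (ContDiff.contDiffOn (by fun_prop)) hbd1 hbd2 R x
end

section
/- Let 0 < T_k ≤ T, let 0 ≤ u_{k+1} < u_k, let K̃ ∈ ℝ and κ ≥ 0. Then ∫_{−κ}^{κ} ( K̃ · e^{u_{k+1}²(T−T_k)/2} · cosh(u_{k+1} x) − e^{u_k²(T−T_k)/2} · cosh(u_k x) ) · (1/√(2π T_k)) · e^{−x²/(2 T_k)} dx = K̃ · e^{u_{k+1}² T/2} · ( Φ(κ/√T_k − u_{k+1} √T_k) − Φ(−κ/√T_k − u_{k+1} √T_k) ) − e^{u_k² T/2} · ( Φ(κ/√T_k − u_k √T_k) − Φ(−κ/√T_k − u_k √T_k) ), where Φ is the standard normal cumulative distribution function and cosh is the real hyperbolic cosine. -/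
open Real Set

/-!
The Gaussian weight is even, so on the symmetric interval `[-κ, κ]` the odd part `sinh (u x)` of
`exp (u x)` integrates to zero and `cosh (u x)` may be replaced by `exp (u x)`. Completing the
square, tilting the centered Gaussian density of variance `v` by `exp (u x)` gives the factor
`exp (v u² / 2)` and moves the mean to `v u`; after standardization each leg is a difference of
values of `Φ`. At `v = T_k` the factor `exp (u² (T - T_k) / 2)` of the martingale turns
`exp (T_k u² / 2)` into `exp (u² T / 2)`.
-/

open MeasureTheory ProbabilityTheory
open scoped NNReal

theorem intervalIntegral_neg_self_eq_zero_of_odd {E : Type*} [NormedAddCommGroup E]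
    [NormedSpace ℝ E] {f : ℝ → E} (hf : f.Odd) (a : ℝ) : ∫ x in -a..a, f x = 0 := by
  have := IsAddTorsionFree.of_isTorsionFree ℝ E
  rw [← self_eq_neg]
  calc ∫ x in -a..a, f x = ∫ x in -a..a, f (-x) := by
        rw [intervalIntegral.integral_comp_neg, neg_neg]
    _ = -∫ x in -a..a, f x := by
        simp only [hf.eq, intervalIntegral.integral_neg]

theorem intervalIntegral_cosh_mul_eq_exp_mul_of_even {f : ℝ → ℝ} {a : ℝ} (hf : f.Even)
    (hfi : IntervalIntegrable f volume (-a) a) (u : ℝ) :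
    ∫ x in -a..a, cosh (u * x) * f x = ∫ x in -a..a, exp (u * x) * f x := by
  have sinh_odd : (fun x ↦ sinh (u * x) * f x).Odd := fun x ↦ by
    simp only [mul_neg, sinh_neg, hf x, neg_mul]
  have exp_split (x : ℝ) :
      exp (u * x) * f x = cosh (u * x) * f x + sinh (u * x) * f x := by
    rw [← add_mul, cosh_add_sinh]
  simp only [exp_split]
  rw [intervalIntegral.integral_add (hfi.continuousOn_mul (by fun_prop))
    (hfi.continuousOn_mul (by fun_prop)), intervalIntegral_neg_self_eq_zero_of_odd sinh_odd,
    add_zero]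

theorem exp_mul_gaussianPDFReal (μ : ℝ) (v : ℝ≥0) (u x : ℝ) :
    exp (u * x) * gaussianPDFReal μ v x =
      exp (μ * u + v * u ^ 2 / 2) * gaussianPDFReal (μ + v * u) v x := by
  rcases eq_or_ne v 0 with rfl | hv
  · simp
  have complete_square : u * x + -(x - μ) ^ 2 / (2 * v) =
      μ * u + v * u ^ 2 / 2 + -(x - (μ + v * u)) ^ 2 / (2 * v) := by
    field_simp
    ring
  simp only [gaussianPDFReal, mul_left_comm (exp _), ← exp_add, complete_square]

theorem gaussianPDFReal_zero_even (v : ℝ≥0) : (gaussianPDFReal 0 v).Even := fun x ↦ by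
  simp only [gaussianPDFReal, sub_zero, neg_sq]

section NondegenerateGaussian

variable {v : ℝ≥0}

theorem cdf_gaussianReal_eq_integral (μ : ℝ) (hv : v ≠ 0) (y : ℝ) :
    cdf (gaussianReal μ v) y = ∫ x in Iic y, gaussianPDFReal μ v x := by
  rw [cdf_eq_real, measureReal_def, gaussianReal_apply_eq_integral μ hv,
    ENNReal.toReal_ofReal (integral_nonneg (gaussianPDFReal_nonneg μ v))]

theorem intervalIntegral_gaussianPDFReal (μ : ℝ) (hv : v ≠ 0) (a b : ℝ) :
    ∫ x in a..b, gaussianPDFReal μ v x =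
      cdf (gaussianReal μ v) b - cdf (gaussianReal μ v) a := by
  have integrableOn (y : ℝ) : IntegrableOn (gaussianPDFReal μ v) (Iic y) :=
    (integrable_gaussianPDFReal μ v).integrableOn
  rw [cdf_gaussianReal_eq_integral μ hv, cdf_gaussianReal_eq_integral μ hv,
    intervalIntegral.integral_Iic_sub_Iic (integrableOn a) (integrableOn b)]

theorem gaussianReal_map_standardize (μ : ℝ) (hv : v ≠ 0) :
    (gaussianReal μ v).map (fun x ↦ (x - μ) / √v) = gaussianReal 0 1 := by
  have variance_eq : v / .mk (√(v : ℝ) ^ 2) (sq_nonneg _) = 1 := by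
    ext
    simp [hv]
  calc (gaussianReal μ v).map (fun x ↦ (x - μ) / √v)
      = ((gaussianReal μ v).map (· - μ)).map (· / √(v : ℝ)) :=
        (Measure.map_map (g := (· / √(v : ℝ))) (f := (· - μ)) (by fun_prop) (by fun_prop)).symm
    _ = gaussianReal 0 1 := by
        rw [gaussianReal_map_sub_const, gaussianReal_map_div_const, sub_self, zero_div,
          variance_eq]

theorem cdf_gaussianReal_eq_cdf_standard (μ : ℝ) (hv : v ≠ 0) (y : ℝ) :
    cdf (gaussianReal μ v) y = cdf (gaussianReal 0 1) ((y - μ) / √v) := by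
  have sqrt_pos : 0 < √(v : ℝ) := sqrt_pos.2 (by positivity)
  have preimage_Iic : (fun x ↦ (x - μ) / √v) ⁻¹' Iic ((y - μ) / √v) = Iic y := by
    ext x
    simp [div_le_div_iff_of_pos_right sqrt_pos]
  rw [cdf_eq_real, cdf_eq_real, ← gaussianReal_map_standardize μ hv,
    map_measureReal_apply (by fun_prop) measurableSet_Iic, preimage_Iic]

theorem intervalIntegral_exp_mul_gaussianPDFReal (μ : ℝ) (hv : v ≠ 0) (u a b : ℝ) :
    ∫ x in a..b, exp (u * x) * gaussianPDFReal μ v x =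
      exp (μ * u + v * u ^ 2 / 2) *
        (cdf (gaussianReal 0 1) ((b - μ) / √v - u * √v) -
          cdf (gaussianReal 0 1) ((a - μ) / √v - u * √v)) := by
  have shift (y : ℝ) : (y - (μ + v * u)) / √v = (y - μ) / √v - u * √v := by
    rw [← sub_sub, sub_div, mul_div_right_comm, div_sqrt, mul_comm]
  simp only [exp_mul_gaussianPDFReal, intervalIntegral.integral_const_mul,
    intervalIntegral_gaussianPDFReal _ hv, cdf_gaussianReal_eq_cdf_standard _ hv, shift]

theorem intervalIntegral_cosh_mul_gaussianPDFReal (hv : v ≠ 0) (u κ : ℝ) :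
    ∫ x in -κ..κ, cosh (u * x) * gaussianPDFReal 0 v x =
      exp (v * u ^ 2 / 2) *
        (cdf (gaussianReal 0 1) (κ / √v - u * √v) -
          cdf (gaussianReal 0 1) (-κ / √v - u * √v)) := by
  rw [intervalIntegral_cosh_mul_eq_exp_mul_of_even (gaussianPDFReal_zero_even v)
    (integrable_gaussianPDFReal 0 v).intervalIntegrable,
    intervalIntegral_exp_mul_gaussianPDFReal 0 hv]
  simp only [zero_mul, zero_add, sub_zero]

end NondegenerateGaussian

theorem stmt_12_general (T : ℝ) {Tk : ℝ} (hTk : 0 < Tk) (uk uk1 Ktil κ : ℝ) {Φ : ℝ → ℝ}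
    (hΦ : ∀ y : ℝ, Φ y = ∫ s in Iic y, (1 / √(2 * π)) * exp (-s ^ 2 / 2)) :
    (∫ x in (-κ)..κ,
        (Ktil * exp (uk1 ^ 2 * (T - Tk) / 2) * cosh (uk1 * x)
          - exp (uk ^ 2 * (T - Tk) / 2) * cosh (uk * x)) *
          (1 / √(2 * π * Tk)) * exp (-x ^ 2 / (2 * Tk)))
      = Ktil * exp (uk1 ^ 2 * T / 2) *
          (Φ (κ / √Tk - uk1 * √Tk) - Φ (-κ / √Tk - uk1 * √Tk))
        - exp (uk ^ 2 * T / 2) *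
          (Φ (κ / √Tk - uk * √Tk) - Φ (-κ / √Tk - uk * √Tk)) := by
  lift Tk to ℝ≥0 using hTk.le
  have hTk_ne : Tk ≠ 0 := by simpa using hTk.ne'
  obtain rfl : Φ = cdf (gaussianReal 0 1) := by
    ext y
    simp [hΦ, cdf_gaussianReal_eq_integral 0 one_ne_zero, gaussianPDFReal]
  have exp_split (u : ℝ) :
      exp (u ^ 2 * T / 2) = exp (u ^ 2 * (T - Tk) / 2) * exp (Tk * u ^ 2 / 2) := by
    rw [← exp_add]
    ring_nf
  have leg_integrable (u : ℝ) :
      IntervalIntegrable (fun x ↦ cosh (u * x) * gaussianPDFReal 0 Tk x) volume (-κ) κ :=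
    (integrable_gaussianPDFReal 0 Tk).intervalIntegrable.continuousOn_mul (by fun_prop)
  calc
    _ = ∫ x in -κ..κ,
          (Ktil * exp (uk1 ^ 2 * (T - Tk) / 2) * (cosh (uk1 * x) * gaussianPDFReal 0 Tk x) -
            exp (uk ^ 2 * (T - Tk) / 2) * (cosh (uk * x) * gaussianPDFReal 0 Tk x)) := by
      congr 1 with x
      simp only [gaussianPDFReal, sub_zero]
      ring
    _ = _ := by
      rw [intervalIntegral.integral_sub ((leg_integrable uk1).const_mul _)
        ((leg_integrable uk).const_mul _)]
      simp only [intervalIntegral.integral_const_mul,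
        intervalIntegral_cosh_mul_gaussianPDFReal hTk_ne, exp_split, mul_assoc]

theorem stmt_12 (T Tk : ℝ) (hTk : 0 < Tk) (hTkT : Tk ≤ T)
    (uk uk1 : ℝ) (huk1 : 0 ≤ uk1) (hu : uk1 < uk)
    (Ktil κ : ℝ) (hκ : 0 ≤ κ)
    (Φ : ℝ → ℝ)
    (hΦ : ∀ y : ℝ, Φ y = ∫ s in Iic y, (1 / Real.sqrt (2 * Real.pi)) * Real.exp (-s ^ 2 / 2)) :
    (∫ x in (-κ)..κ,
        (Ktil * Real.exp (uk1 ^ 2 * (T - Tk) / 2) * Real.cosh (uk1 * x)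
          - Real.exp (uk ^ 2 * (T - Tk) / 2) * Real.cosh (uk * x)) *
          (1 / Real.sqrt (2 * Real.pi * Tk)) * Real.exp (-x ^ 2 / (2 * Tk)))
      = Ktil * Real.exp (uk1 ^ 2 * T / 2) *
          (Φ (κ / Real.sqrt Tk - uk1 * Real.sqrt Tk) - Φ (-κ / Real.sqrt Tk - uk1 * Real.sqrt Tk))
        - Real.exp (uk ^ 2 * T / 2) *
          (Φ (κ / Real.sqrt Tk - uk * Real.sqrt Tk) - Φ (-κ / Real.sqrt Tk - uk * Real.sqrt Tk)) :=
  stmt_12_general T hTk uk uk1 Ktil κ hΦ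
end

section
/- Let λ > 0, α⁺ > 0, α⁻ > 0, β⁺, β⁻ ∈ ℝ, t ≥ 0, and let u ∈ ℝ with −α⁻ < u < α⁺. Then ∫_0^t λ · ( (β⁺ + β⁻)(e^{−λ s} u)² + (β⁺ α⁻ − β⁻ α⁺)(e^{−λ s} u) ) / ( (α⁺ − e^{−λ s} u)(α⁻ + e^{−λ s} u) ) ds = ((β⁺ + β⁻)/2) · log( (α⁺ − e^{−λ t} u)(α⁻ + e^{−λ t} u) / ((α⁺ − u)(α⁻ + u)) ) + ((β⁺ − β⁻)/2) · log( (α⁺ − e^{−λ t} u)(α⁻ + u) / ((α⁺ − u)(α⁻ + e^{−λ t} u)) ). (Note that |e^{−λ s} u| ≤ |u| for s ≥ 0, so the integrand's denominator never vanishes on [0, t].) -/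
open Real

/-!
The flow `w = exp (-λ s) * u` satisfies `dw = -λ w ds`, so it turns `∫ κ(w) ds` into
`-∫ κ(w) / (λ w) dw` from `u` to `exp (-λ t) * u`. The partial fractions
`-κ(w) / (λ w) = β⁺ / (w - α⁺) + β⁻ / (w + α⁻)` integrate to `β⁺ log P + β⁻ log Q`, where `P` and
`Q` are the ratios of the final to the initial values of `α⁺ - w` and `α⁻ + w`; it remains to
write `log P` and `log Q` in terms of `log (P * Q)` and `log (P / Q)`.
-/

/-- The cumulant generating function `κ` of the Lévy process driving the Double Γ-OU process.
It is total on `ℝ`, with the value `0` (division by zero) at its poles `αp` and `-αm`. -/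
noncomputable def doubleGammaCumulant (lam αp αm βp βm w : ℝ) : ℝ :=
  lam * ((βp + βm) * w ^ 2 + (βp * αm - βm * αp) * w) / ((αp - w) * (αm + w))

theorem doubleGammaCumulant_eq_partial_fractions {αp αm w : ℝ} (lam βp βm : ℝ)
    (hp : w ≠ αp) (hm : w ≠ -αm) :
    doubleGammaCumulant lam αp αm βp βm w =
      -lam * w * (βp * (w - αp)⁻¹ + βm * (w - -αm)⁻¹) := by
  have hp₁ : αp - w ≠ 0 := sub_ne_zero.mpr hp.symm
  have hp₂ : w - αp ≠ 0 := sub_ne_zero.mpr hp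
  have hm₁ : αm + w ≠ 0 := fun h => hm (by linarith)
  have hm₂ : w - -αm ≠ 0 := sub_ne_zero.mpr hm
  rw [doubleGammaCumulant]
  field_simp
  ring

theorem exp_mul_mul_mem_uIcc {a b s : ℝ} (c u : ℝ) (hs : s ∈ Set.uIcc a b) :
    exp (c * s) * u ∈ Set.uIcc (exp (c * a) * u) (exp (c * b) * u) := by
  have h_linear : c * s ∈ Set.uIcc (c * a) (c * b) :=
    Set.image_const_mul_uIcc c a b ▸ Set.mem_image_of_mem _ hs
  have h_exp : exp (c * s) ∈ Set.uIcc (exp (c * a)) (exp (c * b)) :=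
    exp_monotone.image_uIcc_subset (Set.mem_image_of_mem _ h_linear)
  exact Set.image_mul_const_uIcc u _ _ ▸ Set.mem_image_of_mem (· * u) h_exp

theorem hasDerivAt_exp_mul_mul (c u s : ℝ) :
    HasDerivAt (fun s => exp (c * s) * u) (c * (exp (c * s) * u)) s :=
  (((hasDerivAt_id' s).const_mul c).exp.mul_const u).congr_deriv (by ring)

theorem integral_smul_comp_exp_mul_mul {E : Type*} [NormedAddCommGroup E] [NormedSpace ℝ E]
    {g : ℝ → E} {a b c u : ℝ}
    (hg : ContinuousOn g (Set.uIcc (exp (c * a) * u) (exp (c * b) * u))) :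
    ∫ s in a..b, (c * (exp (c * s) * u)) • g (exp (c * s) * u) =
      ∫ w in (exp (c * a) * u)..(exp (c * b) * u), g w :=
  intervalIntegral.integral_deriv_smul_comp'' (by fun_prop)
    (fun s _ => (hasDerivAt_exp_mul_mul c u s).hasDerivWithinAt) (by fun_prop)
    (hg.mono (Set.image_subset_iff.mpr fun _ => exp_mul_mul_mem_uIcc c u))

theorem continuousOn_inv_sub_const {𝕜 : Type*} [DivisionRing 𝕜] [TopologicalSpace 𝕜]
    [IsTopologicalDivisionRing 𝕜] {s : Set 𝕜} {d : 𝕜} (hd : d ∉ s) :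
    ContinuousOn (fun x => (x - d)⁻¹) s :=
  (continuous_sub_right d).continuousOn.inv₀
    fun _ hx => sub_ne_zero.mpr (ne_of_mem_of_not_mem hx hd)

theorem integral_inv_sub_const {a b d : ℝ} (hd : d ∉ Set.uIcc a b) :
    ∫ x in a..b, (x - d)⁻¹ = log ((d - b) / (d - a)) := by
  have h_zero : (0 : ℝ) ∉ Set.uIcc (a - d) (b - d) := by
    rw [← Set.image_sub_const_uIcc]
    rintro ⟨x, hx, hxd⟩
    exact hd (sub_eq_zero.mp hxd ▸ hx)
  rw [intervalIntegral.integral_comp_sub_right (fun x => x⁻¹), integral_inv h_zero,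
    ← neg_div_neg_eq, neg_sub, neg_sub]

theorem integral_mul_inv_sub_add_mul_inv_sub {a b d e : ℝ} (p q : ℝ)
    (hd : d ∉ Set.uIcc a b) (he : e ∉ Set.uIcc a b) :
    ∫ x in a..b, (p * (x - d)⁻¹ + q * (x - e)⁻¹) =
      p * log ((d - b) / (d - a)) + q * log ((e - b) / (e - a)) := by
  rw [intervalIntegral.integral_add
      ((continuousOn_inv_sub_const hd).intervalIntegrable.const_mul p)
      ((continuousOn_inv_sub_const he).intervalIntegrable.const_mul q),
    intervalIntegral.integral_const_mul, intervalIntegral.integral_const_mul,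
    integral_inv_sub_const hd, integral_inv_sub_const he]

theorem integral_doubleGammaCumulant_exp_mul_mul {a b lam αp αm u : ℝ} (βp βm : ℝ)
    (hp : αp ∉ Set.uIcc (exp (-lam * a) * u) (exp (-lam * b) * u))
    (hm : -αm ∉ Set.uIcc (exp (-lam * a) * u) (exp (-lam * b) * u)) :
    ∫ s in a..b, doubleGammaCumulant lam αp αm βp βm (exp (-lam * s) * u) =
      βp * log ((αp - exp (-lam * b) * u) / (αp - exp (-lam * a) * u)) +
        βm * log ((αm + exp (-lam * b) * u) / (αm + exp (-lam * a) * u)) := by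
  let g (w : ℝ) : ℝ := βp * (w - αp)⁻¹ + βm * (w - -αm)⁻¹
  have hg : ContinuousOn g (Set.uIcc (exp (-lam * a) * u) (exp (-lam * b) * u)) :=
    ((continuousOn_inv_sub_const hp).const_mul βp).add
      ((continuousOn_inv_sub_const hm).const_mul βm)
  calc
    _ = ∫ s in a..b, (-lam * (exp (-lam * s) * u)) • g (exp (-lam * s) * u) :=
      intervalIntegral.integral_congr fun s hs =>
        have hw := exp_mul_mul_mem_uIcc (-lam) u hs
        doubleGammaCumulant_eq_partial_fractions lam βp βm
          (ne_of_mem_of_not_mem hw hp) (ne_of_mem_of_not_mem hw hm)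
    _ = ∫ w in (exp (-lam * a) * u)..(exp (-lam * b) * u), g w :=
      integral_smul_comp_exp_mul_mul hg
    _ = _ := by
      rw [integral_mul_inv_sub_add_mul_inv_sub βp βm hp hm, ← neg_add', ← neg_add',
        neg_div_neg_eq]

theorem half_add_mul_log_mul_add_half_sub_mul_log_div {x y : ℝ} (p q : ℝ)
    (hx : x ≠ 0) (hy : y ≠ 0) :
    (p + q) / 2 * log (x * y) + (p - q) / 2 * log (x / y) = p * log x + q * log y := by
  rw [log_mul hx hy, log_div hx hy]
  ring

theorem stmt_15_general {lam αp αm t u : ℝ} (βp βm : ℝ)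
    (hp : αp ∉ Set.uIcc u (exp (-lam * t) * u))
    (hm : -αm ∉ Set.uIcc u (exp (-lam * t) * u)) :
    ∫ s in (0 : ℝ)..t, doubleGammaCumulant lam αp αm βp βm (exp (-lam * s) * u) =
      (βp + βm) / 2 *
          log ((αp - exp (-lam * t) * u) * (αm + exp (-lam * t) * u) / ((αp - u) * (αm + u))) +
        (βp - βm) / 2 *
          log ((αp - exp (-lam * t) * u) * (αm + u) /
            ((αp - u) * (αm + exp (-lam * t) * u))) := by
  have h_start : exp (-lam * 0) * u = u := by simp
  have h_integral := integral_doubleGammaCumulant_exp_mul_mul (a := 0) (b := t) (lam := lam)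
    (αp := αp) (αm := αm) (u := u) βp βm (by rwa [h_start]) (by rwa [h_start])
  rw [h_start] at h_integral
  have hp_ne {w : ℝ} (hw : w ∈ Set.uIcc u (exp (-lam * t) * u)) : αp - w ≠ 0 :=
    sub_ne_zero.mpr (ne_of_mem_of_not_mem hw hp).symm
  have hm_ne {w : ℝ} (hw : w ∈ Set.uIcc u (exp (-lam * t) * u)) : αm + w ≠ 0 :=
    fun h => ne_of_mem_of_not_mem hw hm (eq_neg_of_add_eq_zero_right h)
  rw [h_integral, ← half_add_mul_log_mul_add_half_sub_mul_log_div βp βm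
    (div_ne_zero (hp_ne Set.right_mem_uIcc) (hp_ne Set.left_mem_uIcc))
    (div_ne_zero (hm_ne Set.right_mem_uIcc) (hm_ne Set.left_mem_uIcc)),
    div_mul_div_comm, div_div_div_eq]

theorem uIcc_mul_subset_of_zero_mem {s : Set ℝ} [hs : s.OrdConnected] {c u : ℝ}
    (h_zero : 0 ∈ s) (hu : u ∈ s) (hc : c ∈ Set.Icc 0 1) : Set.uIcc u (c * u) ⊆ s :=
  hs.uIcc_subset hu (hs.convex.smul_mem_of_zero_mem h_zero hu hc)

theorem stmt_15 (lam αp αm βp βm t u : ℝ)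
    (hlam : 0 < lam) (hαp : 0 < αp) (hαm : 0 < αm) (ht : 0 ≤ t)
    (hu1 : -αm < u) (hu2 : u < αp) :
    (∫ s in (0 : ℝ)..t,
        lam * ((βp + βm) * (Real.exp (-lam * s) * u) ^ 2
            + (βp * αm - βm * αp) * (Real.exp (-lam * s) * u)) /
          ((αp - Real.exp (-lam * s) * u) * (αm + Real.exp (-lam * s) * u)))
      = (βp + βm) / 2 *
          Real.log ((αp - Real.exp (-lam * t) * u) * (αm + Real.exp (-lam * t) * u) /
            ((αp - u) * (αm + u)))
        + (βp - βm) / 2 *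
          Real.log ((αp - Real.exp (-lam * t) * u) * (αm + u) /
            ((αp - u) * (αm + Real.exp (-lam * t) * u))) := by
  have h_exp : exp (-lam * t) ∈ Set.Icc 0 1 :=
    ⟨(exp_pos _).le, exp_le_one_iff.mpr (by nlinarith)⟩
  have h_subset : Set.uIcc u (exp (-lam * t) * u) ⊆ Set.Ioo (-αm) αp :=
    uIcc_mul_subset_of_zero_mem ⟨neg_lt_zero.mpr hαm, hαp⟩ ⟨hu1, hu2⟩ h_exp
  exact stmt_15_general βp βm (fun h => (h_subset h).2.false) (fun h => (h_subset h).1.false)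
end
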